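/- Let p and q be probability mass functions on a finite nonempty type 𝒳, let m := (p + q)/2, and define JSD(p, q) := (1/2)·KL(p ‖ m) + (1/2)·KL(q ‖ m). For a function D : 𝒳 → (0, 1) define V(D) := Σ_x p(x) · log(D(x)) + Σ_x q(x) · log(1 − D(x)), and let D* : 𝒳 → (0, 1) satisfy D*(x) = p(x) / (p(x) + q(x)) for every x with p(x) + q(x) > 0. Then V(D*) = −log 4 + 2 · JSD(p, q). -/

import Mathlib

open Classical Finset Real

/-- `μ` is a probability mass function on the finite type `Ω`. -/
def IsPMF {Ω : Type*} [Fintype Ω] (μ : Ω → ℝ) : Prop :=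
  (∀ ω, 0 ≤ μ ω) ∧ ∑ ω, μ ω = 1

open Classical in
/-- Probability that the random variable `X` takes the value `a`, under `μ`. -/
noncomputable def pr {Ω α : Type*} [Fintype Ω] (μ : Ω → ℝ) (X : Ω → α) (a : α) : ℝ :=
  ∑ ω, if X ω = a then μ ω else 0

/-- Shannon entropy `H(X)` (natural logarithm). -/
noncomputable def ent {Ω α : Type*} [Fintype Ω] [Fintype α] (μ : Ω → ℝ) (X : Ω → α) : ℝ :=
  -∑ a, pr μ X a * Real.log (pr μ X a)

/-- Conditional entropy `H(X | Y) := H(X, Y) - H(Y)`. -/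
noncomputable def condEnt {Ω α β : Type*} [Fintype Ω] [Fintype α] [Fintype β]
    (μ : Ω → ℝ) (X : Ω → α) (Y : Ω → β) : ℝ :=
  ent μ (fun ω => (X ω, Y ω)) - ent μ Y

/-- Mutual information `I(X; Y) := H(X) + H(Y) - H(X, Y)`. -/
noncomputable def mi {Ω α β : Type*} [Fintype Ω] [Fintype α] [Fintype β]
    (μ : Ω → ℝ) (X : Ω → α) (Y : Ω → β) : ℝ :=
  ent μ X + ent μ Y - ent μ (fun ω => (X ω, Y ω))

/-- Conditional mutual information
`I(X; Y | Z) := H(X, Z) + H(Y, Z) - H(X, Y, Z) - H(Z)`. -/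
noncomputable def condMI {Ω α β γ : Type*} [Fintype Ω] [Fintype α] [Fintype β] [Fintype γ]
    (μ : Ω → ℝ) (X : Ω → α) (Y : Ω → β) (Z : Ω → γ) : ℝ :=
  ent μ (fun ω => (X ω, Z ω)) + ent μ (fun ω => (Y ω, Z ω))
    - ent μ (fun ω => ((X ω, Y ω), Z ω)) - ent μ Z

/-- Independence of the random variables `X` and `Y` under `μ`. -/
def IndepRV {Ω α β : Type*} [Fintype Ω] (μ : Ω → ℝ) (X : Ω → α) (Y : Ω → β) : Prop :=
  ∀ a b, pr μ (fun ω => (X ω, Y ω)) (a, b) = pr μ X a * pr μ Y b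

/-- Kullback–Leibler divergence between pmfs on a finite type (natural logarithm). -/
noncomputable def KL {α : Type*} [Fintype α] (p q : α → ℝ) : ℝ :=
  ∑ x, p x * Real.log (p x / q x)

/-- Jensen–Shannon divergence between pmfs on a finite type. -/
noncomputable def JSD {α : Type*} [Fintype α] (p q : α → ℝ) : ℝ :=
  (1 / 2) * KL p (fun x => (p x + q x) / 2) + (1 / 2) * KL q (fun x => (p x + q x) / 2)

/-!
At `D = p / (p + q)` the two halves of the objective are the divergences of `p` and of `q` from the
unnormalized mixture `p + q`. Halving that mixture raises each divergence by `log 2` per unit of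
mass, which gives the constant `2 log 2 = log 4` for probability mass functions.
-/

section

variable {α : Type*} [Fintype α]

lemma KL_eq_sum_mul_log {p q r : α → ℝ} (hr : ∀ x, p x ≠ 0 → r x = p x / q x) :
    KL p q = ∑ x, p x * Real.log (r x) := by
  refine sum_congr rfl fun x _ => ?_
  rcases eq_or_ne (p x) 0 with hpx | hpx
  · simp [hpx]
  · rw [hr x hpx]

lemma KL_div_const {p q : α → ℝ} (hpq : ∀ x, p x ≠ 0 → q x ≠ 0) {c : ℝ} (hc : c ≠ 0) :
    KL p (fun x => q x / c) = KL p q + (∑ x, p x) * Real.log c := by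
  have hlog (x : α) :
      p x * Real.log (p x / (q x / c)) = p x * Real.log (p x / q x) + p x * Real.log c := by
    rcases eq_or_ne (p x) 0 with hpx | hpx
    · simp [hpx]
    · rw [← div_mul, Real.log_mul (div_ne_zero hpx (hpq x hpx)) hc, mul_add]
  simp only [KL, hlog, sum_add_distrib, sum_mul]

lemma two_mul_JSD_eq {p q : α → ℝ} (hp : ∀ x, 0 ≤ p x) (hq : ∀ x, 0 ≤ q x) :
    2 * JSD p q = KL p (fun x => p x + q x) + KL q (fun x => p x + q x)
      + (∑ x, p x + ∑ x, q x) * Real.log 2 := by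
  have hp_supp (x : α) (hpx : p x ≠ 0) : p x + q x ≠ 0 :=
    (add_pos_of_pos_of_nonneg ((hp x).lt_of_ne' hpx) (hq x)).ne'
  have hq_supp (x : α) (hqx : q x ≠ 0) : p x + q x ≠ 0 :=
    (add_pos_of_nonneg_of_pos (hp x) ((hq x).lt_of_ne' hqx)).ne'
  rw [JSD, KL_div_const hp_supp two_ne_zero, KL_div_const hq_supp two_ne_zero]
  ring

theorem gan_value_eq_jsd_general {p q : α → ℝ} (hp : ∀ x, 0 ≤ p x) (hq : ∀ x, 0 ≤ q x)
    {D : α → ℝ} (hD : ∀ x, 0 < p x + q x → D x = p x / (p x + q x)) :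
    (∑ x, p x * Real.log (D x)) + (∑ x, q x * Real.log (1 - D x))
      = -((∑ x, p x + ∑ x, q x) * Real.log 2) + 2 * JSD p q := by
  have hKLp : KL p (fun x => p x + q x) = ∑ x, p x * Real.log (D x) :=
    KL_eq_sum_mul_log fun x hpx =>
      hD x (add_pos_of_pos_of_nonneg ((hp x).lt_of_ne' hpx) (hq x))
  have hKLq : KL q (fun x => p x + q x) = ∑ x, q x * Real.log (1 - D x) :=
    KL_eq_sum_mul_log fun x hqx => by
      have hpos : 0 < p x + q x := add_pos_of_nonneg_of_pos (hp x) ((hq x).lt_of_ne' hqx)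
      rw [hD x hpos, one_sub_div hpos.ne', add_sub_cancel_left]
  rw [← hKLp, ← hKLq, two_mul_JSD_eq hp hq]
  ring

end

/-- At the optimal discriminator `D* = p / (p + q)`, the GAN objective equals the
Jensen–Shannon divergence between `p` and `q` up to the constant `-log 4`. -/
theorem gan_value_eq_jsd {X : Type*} [Fintype X] [Nonempty X]
    (p q : X → ℝ) (hp : IsPMF p) (hq : IsPMF q)
    (Dstar : X → ℝ) (hDs0 : ∀ x, 0 < Dstar x) (hDs1 : ∀ x, Dstar x < 1)
    (hDstar : ∀ x, 0 < p x + q x → Dstar x = p x / (p x + q x)) :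
    (∑ x, p x * Real.log (Dstar x)) + (∑ x, q x * Real.log (1 - Dstar x))
      = -Real.log 4 + 2 * JSD p q := by
  rw [gan_value_eq_jsd_general hp.1 hq.1 hDstar, hp.2, hq.2, one_add_one_eq_two, Real.log_four_eq]
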